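/- arXiv:1809.02946 — 2 statements merged into one kernel-verified Lean document; each statement's English description precedes it below -/
import Mathlib

section
/- Let M, w, s, c be real numbers with M > 0, w > 0, s > 0, c > 0, let K ≥ 2 be a natural number, and let p₁ ≥ 0. Define a(T) = (√2·T·w·s + 1)/(√M − √2·T·w·s) and b(T) = (2√2·T·w·c)/(√M − √2·T·w·s), and define recursively p_{i+1}(T) = a(T)·p_i(T) + b(T) for i = 1, …, K−1 with p₁(T) = p₁. Then the function T ↦ Σ_{i=1}^{K} p_i(T) is strictly increasing on the open interval (0, √(M/2)/(w·s)). -/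
/-- Proposition 3: the total constellation power `∑_{i=1}^K p_i(T)`, generated by the
recursion `p_{i+1}(T) = a(T) p_i(T) + b(T)` with `p₁(T) = p₁`, is strictly increasing in
`T` on `(0, √(M/2)/(w s))`. -/
theorem total_power_strictMono (M w s c : ℝ)
    (hM : 0 < M) (hw : 0 < w) (hs : 0 < s) (hc : 0 < c)
    (K : ℕ) (hK : 2 ≤ K) (p₁ : ℝ) (hp₁ : 0 ≤ p₁)
    (a b : ℝ → ℝ)
    (ha : a = fun T =>
      (Real.sqrt 2 * T * w * s + 1) / (Real.sqrt M - Real.sqrt 2 * T * w * s))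
    (hb : b = fun T =>
      (2 * Real.sqrt 2 * T * w * c) / (Real.sqrt M - Real.sqrt 2 * T * w * s))
    (p : ℝ → ℕ → ℝ)
    (hpinit : ∀ T, p T 1 = p₁)
    (hprec : ∀ T, ∀ i, 1 ≤ i → i ≤ K - 1 → p T (i + 1) = a T * p T i + b T) :
    StrictMonoOn (fun T => ∑ i ∈ Finset.Icc 1 K, p T i)
      (Set.Ioo (0 : ℝ) (Real.sqrt (M / 2) / (w * s))) := by
  intro x hx y hy hxy
  have h2 : 0 < Real.sqrt 2 := by positivity
  have hDy : 0 < Real.sqrt M - Real.sqrt 2 * y * w * s := by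
    have h := hy.2
    rw [lt_div_iff₀ (by positivity)] at h
    have h3 : Real.sqrt 2 * Real.sqrt (M / 2) = Real.sqrt M := by
      rw [← Real.sqrt_mul (by norm_num)]
      congr 1
      ring
    have h4 := mul_lt_mul_of_pos_left h h2
    rw [h3] at h4
    linarith
  have hx0 : 0 < x := hx.1
  have hy0 : 0 < y := hy.1
  have hlt : Real.sqrt 2 * x * w * s < Real.sqrt 2 * y * w * s := by gcongr
  have hDx : 0 < Real.sqrt M - Real.sqrt 2 * x * w * s := by linarith
  have hax : 0 ≤ a x := by
    rw [ha]
    exact div_nonneg (by positivity) hDx.le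
  have hay : a x ≤ a y := by
    rw [ha]
    exact div_le_div₀ (by positivity) (by linarith) hDy (by linarith)
  have hbx : 0 ≤ b x := by
    rw [hb]
    exact div_nonneg (by positivity) hDx.le
  have hby : b x < b y := by
    rw [hb]
    exact div_lt_div₀ (by gcongr) (by linarith) (by positivity) hDy
  have key : ∀ i, 1 ≤ i → i ≤ K → 0 ≤ p x i ∧ p x i ≤ p y i := by
    intro i hi
    induction i, hi using Nat.le_induction with
    | base =>
      intro _
      rw [hpinit, hpinit]
      exact ⟨hp₁, le_rfl⟩
    | succ n hn ih =>
      intro hnK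
      obtain ⟨h0, h1⟩ := ih (by omega)
      rw [hprec x n hn (by omega), hprec y n hn (by omega)]
      have := mul_le_mul hay h1 h0 (hax.trans hay)
      exact ⟨by positivity, by linarith⟩
  refine Finset.sum_lt_sum (fun i hi => ?_) ⟨2, Finset.mem_Icc.2 ⟨by norm_num, hK⟩, ?_⟩
  · rw [Finset.mem_Icc] at hi
    exact (key i hi.1 hi.2).2
  · have e1 := hprec x 1 le_rfl (by omega)
    have e2 := hprec y 1 le_rfl (by omega)
    rw [hpinit] at e1 e2
    norm_num at e1 e2
    rw [e1, e2]
    have := mul_le_mul_of_nonneg_right hay hp₁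
    linarith
end

section
/- Let K ≥ 2 be a natural number and c > 0 a real constant, and define P(M) = 1 − ((K−1)·erf(c·√M) + 1)/K for M > 0. Then P(M) · (K/(K−1)) · √π · c·√M · exp(c²·M) tends to 1 as M → +∞. Consequently, for every δ > 0 there is M₀ such that for all M ≥ M₀, log₁₀ P(M) lies within δ + (1/2)·log₁₀ M of −c²·M·log₁₀(e) + log₁₀((K−1)/(√π·K·c)). -/
open Filter

/-- The error function `erf x = (2/√π) ∫_0^x exp(-t²) dt`. -/
noncomputable def erf (x : ℝ) : ℝ :=
  (2 / Real.sqrt Real.pi) * ∫ t in (0 : ℝ)..x, Real.exp (-t ^ 2)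

lemma erfc_asymp : Tendsto (fun x : ℝ => (1 - erf x) * Real.sqrt Real.pi * x * Real.exp (x ^ 2))
    atTop (nhds 1) := by
  have hpi : 0 < Real.sqrt Real.pi := Real.sqrt_pos.mpr Real.pi_pos
  have hint : MeasureTheory.IntegrableOn (fun t : ℝ => Real.exp (-t ^ 2)) (Set.Ioi 0) := by
    have := (integrable_exp_neg_mul_sq (b := 1) one_pos).integrableOn (s := Set.Ioi 0)
    simpa using this
  have hval : ∫ t in Set.Ioi (0:ℝ), Real.exp (-t ^ 2) = Real.sqrt Real.pi / 2 := by
    have := integral_gaussian_Ioi 1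
    simpa using this
  have hcont : Continuous (fun t : ℝ => Real.exp (-t ^ 2)) := by fun_prop
  have hlim := MeasureTheory.intervalIntegral_tendsto_integral_Ioi (0:ℝ) hint tendsto_id
  rw [hval] at hlim
  have hexp : Tendsto (fun x : ℝ => Real.exp (-x ^ 2)) atTop (nhds 0) := by
    refine Real.tendsto_exp_atBot.comp ?_
    exact tendsto_neg_atTop_atBot.comp (tendsto_pow_atTop two_ne_zero)
  have hinv : Tendsto (fun x : ℝ => (2 * x)⁻¹) atTop (nhds 0) :=
    tendsto_inv_atTop_zero.comp (tendsto_id.const_mul_atTop two_pos)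
  have key : Tendsto (fun x : ℝ => (Real.sqrt Real.pi / 2 - ∫ t in (0:ℝ)..x, Real.exp (-t ^ 2)) /
      (Real.exp (-x ^ 2) * (2 * x)⁻¹)) atTop (nhds 1) := by
    apply HasDerivAt.lhopital_zero_atTop (f' := fun x => -Real.exp (-x ^ 2))
      (g' := fun x => -Real.exp (-x ^ 2) * (1 + 2 * (2 * x)⁻¹ ^ 2))
    · filter_upwards with x
      have := (hcont.integral_hasStrictDerivAt 0 x).hasDerivAt.const_sub (Real.sqrt Real.pi / 2)
      exact this
    · filter_upwards [eventually_gt_atTop 0] with x hx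
      have h1 : HasDerivAt (fun x : ℝ => Real.exp (-x ^ 2)) (Real.exp (-x ^ 2) * (-(2 * x))) x := by
        have := ((hasDerivAt_pow 2 x).neg).exp
        simpa using this
      have h2 : HasDerivAt (fun x : ℝ => (2 * x)⁻¹) (-2 / (2 * x) ^ 2) x := by
        have := ((hasDerivAt_id x).const_mul 2).inv (by simp; exact hx.ne')
        refine HasDerivAt.congr_deriv (f := fun x : ℝ => (2 * x)⁻¹) this ?_
        simp
      refine HasDerivAt.congr_deriv (h1.mul h2) ?_
      field_simp
      ring
    · filter_upwards with x
      have : 0 < Real.exp (-x ^ 2) * (1 + 2 * (2 * x)⁻¹ ^ 2) := by positivity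
      linarith
    · simpa using hlim.const_sub (Real.sqrt Real.pi / 2)
    · simpa using hexp.mul hinv
    · have h : Tendsto (fun x : ℝ => (1 + 2 * (2 * x)⁻¹ ^ 2)⁻¹) atTop (nhds 1) := by
        have := (((hinv.pow 2).const_mul 2).const_add 1).inv₀ (by simp)
        simpa using this
      refine h.congr fun x => ?_
      have := Real.exp_pos (-x ^ 2)
      have h3 : 0 < 1 + 2 * (2 * x)⁻¹ ^ 2 := by positivity
      rw [div_mul_eq_div_div, div_self (by linarith), one_div]
  refine key.congr' ?_
  filter_upwards [eventually_gt_atTop 0] with x hx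
  rw [erf, Real.exp_neg]
  field_simp

/-- The asymptotics of `P_{e,opt}(M) = 1 - ((K-1) erf(c √M) + 1)/K` as the number of
antennas `M → ∞`: `P(M) (K/(K-1)) √π c √M exp(c² M) → 1`, and consequently
`log₁₀ P(M)` is within `δ + (1/2) log₁₀ M` of
`-c² M log₁₀ e + log₁₀((K-1)/(√π K c))` for all large `M`. -/
theorem ser_opt_asymptotics (K : ℕ) (hK : 2 ≤ K) (c : ℝ) (hc : 0 < c)
    (P : ℝ → ℝ)
    (hP : P = fun M => 1 - (((K : ℝ) - 1) * erf (c * Real.sqrt M) + 1) / K) :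
    Tendsto (fun M : ℝ => P M * ((K : ℝ) / ((K : ℝ) - 1)) * Real.sqrt Real.pi
        * (c * Real.sqrt M) * Real.exp (c ^ 2 * M)) atTop (nhds 1) ∧
    ∀ δ > (0 : ℝ), ∃ M₀ : ℝ, ∀ M ≥ M₀,
      |Real.logb 10 (P M) -
          (-(c ^ 2 * M) * Real.logb 10 (Real.exp 1)
            + Real.logb 10 (((K : ℝ) - 1) / (Real.sqrt Real.pi * (K : ℝ) * c)))|
        ≤ δ + (1 / 2) * Real.logb 10 M := by
  have hK' : (2:ℝ) ≤ K := by exact_mod_cast hK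
  have hK0 : (0:ℝ) < K := by linarith
  have hK1 : (0:ℝ) < (K:ℝ) - 1 := by linarith
  have hpi : 0 < Real.sqrt Real.pi := Real.sqrt_pos.mpr Real.pi_pos
  have main : Tendsto (fun M : ℝ => P M * ((K : ℝ) / ((K : ℝ) - 1)) * Real.sqrt Real.pi
        * (c * Real.sqrt M) * Real.exp (c ^ 2 * M)) atTop (nhds 1) := by
    have := erfc_asymp.comp (Real.tendsto_sqrt_atTop.const_mul_atTop hc)
    refine this.congr' ?_
    filter_upwards [eventually_ge_atTop 0] with M hM
    have e : P M * ((K : ℝ) / ((K : ℝ) - 1)) = 1 - erf (c * Real.sqrt M) := by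
      rw [hP]
      field_simp
      ring
    rw [e]
    simp only [Function.comp]
    rw [mul_pow, Real.sq_sqrt hM]
  refine ⟨main, fun δ hδ => ?_⟩
  have hlog := main.log one_ne_zero
  rw [Real.log_one] at hlog
  have hlogb := hlog.div_const (Real.log 10)
  rw [zero_div] at hlogb
  have hev := hlogb.eventually (Metric.ball_mem_nhds 0 hδ)
  have hpos := main.eventually (lt_mem_nhds (zero_lt_one' ℝ))
  obtain ⟨M₀, h⟩ := eventually_atTop.mp (hev.and (hpos.and (eventually_ge_atTop 1)))
  refine ⟨M₀, fun M hM => ?_⟩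
  obtain ⟨h1, h2, h3⟩ := h M hM
  have hM0 : 0 < M := by linarith
  have hs : 0 < Real.sqrt M := Real.sqrt_pos.mpr hM0
  have hPpos : 0 < P M := by
    by_contra hn
    push Not at hn
    have h5 : 0 ≤ ((K : ℝ) / ((K : ℝ) - 1)) * Real.sqrt Real.pi
        * (c * Real.sqrt M) * Real.exp (c ^ 2 * M) := by positivity
    have := mul_nonpos_of_nonpos_of_nonneg hn h5
    simp only [← mul_assoc] at this h2
    linarith
  have hl10 : 0 < Real.log 10 := Real.log_pos (by norm_num)
  have hlM : 0 ≤ Real.logb 10 M := Real.logb_nonneg (by norm_num) h3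
  rw [Real.dist_eq, sub_zero] at h1
  have e : Real.logb 10 (P M) -
          (-(c ^ 2 * M) * Real.logb 10 (Real.exp 1)
            + Real.logb 10 (((K : ℝ) - 1) / (Real.sqrt Real.pi * (K : ℝ) * c)))
      = Real.log (P M * ((K : ℝ) / ((K : ℝ) - 1)) * Real.sqrt Real.pi
        * (c * Real.sqrt M) * Real.exp (c ^ 2 * M)) / Real.log 10
        - (1 / 2) * Real.logb 10 M := by
    simp only [Real.logb]
    rw [Real.log_mul (by positivity) (by positivity), Real.log_mul (by positivity) (by positivity),
      Real.log_mul (by positivity) (by positivity), Real.log_mul (by positivity) (by positivity),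
      Real.log_mul (by positivity) (by positivity), Real.log_div (by positivity) (by positivity),
      Real.log_div (by positivity) (by positivity), Real.log_mul (by positivity) (by positivity),
      Real.log_mul (by positivity) (by positivity), Real.log_exp, Real.log_exp,
      Real.log_sqrt hM0.le]
    field_simp
    ring
  rw [e]
  rw [abs_lt] at h1
  rw [abs_le]
  constructor <;> linarith [h1.1, h1.2]
end
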